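/- Let d ∈ ℕ and let f : S_d → ℝ be twice continuously differentiable on S_d, with a unique maximizer s₀ ∈ Int(S_d) at which the gradient ∇f(s₀) vanishes. Let g : S_d → ℝ attain its supremum at some ŝ ∈ S_d, and suppose there exists λ > 0 such that, at every point t on the line segment joining s₀ and ŝ, the Hessian satisfies −∇²f(t) ⪰ λ I (i.e., all eigenvalues of −∇²f(t) are at least λ). Then ‖ŝ − s₀‖₂² ≤ (4/λ) · sup_{t ∈ S_d} |g(t) − f(t)|. -/

import Mathlib

open MeasureTheory Filter Asymptotics Real Topology

noncomputable section

/-- The `d`-dimensional simplex `S_d = {s ∈ [0,1]^d : ‖s‖₁ ≤ 1}`. -/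
def Sd (d : ℕ) : Set (Fin d → ℝ) :=
  {s | (∀ i, s i ∈ Set.Icc (0 : ℝ) 1) ∧ ∑ i, |s i| ≤ 1}

/-- The interior of the simplex, `Int(S_d) = {s ∈ (0,1)^d : ‖s‖₁ < 1}`. -/
def SdInt (d : ℕ) : Set (Fin d → ℝ) :=
  {s | (∀ i, s i ∈ Set.Ioo (0 : ℝ) 1) ∧ ∑ i, |s i| < 1}

/-- The Dirichlet(u, v) density on the simplex, evaluated at `x`. -/
def dirK (d : ℕ) (u : Fin d → ℝ) (v : ℝ) (x : Fin d → ℝ) : ℝ :=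
  (Real.Gamma (∑ i, u i + v) / (Real.Gamma v * ∏ i, Real.Gamma (u i))) *
    (1 - ∑ i, x i) ^ (v - 1) * ∏ i, (x i) ^ (u i - 1)

/-- The Dirichlet kernel `κ_{s,b} = K_{s/b+1, (1-‖s‖₁)/b+1}`. -/
def kappa (d : ℕ) (s : Fin d → ℝ) (b : ℝ) (x : Fin d → ℝ) : ℝ :=
  dirK d (fun i => s i / b + 1) ((1 - ∑ i, s i) / b + 1) x

/-- `ψ(s) = (4π)^{-d/2} / ((1-‖s‖₁)^{1/2} ∏ s_i^{1/2})`. -/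
def psiFun (d : ℕ) (s : Fin d → ℝ) : ℝ :=
  (4 * π) ^ (-(d : ℝ) / 2) /
    ((1 - ∑ i, s i) ^ ((1 : ℝ) / 2) * ∏ i, (s i) ^ ((1 : ℝ) / 2))

/-- The Dirichlet kernel density estimator `f̂_{n,b}(s)`. -/
def fhat {Ω : Type*} (d n : ℕ) (b : ℝ) (X : ℕ → Ω → (Fin d → ℝ))
    (s : Fin d → ℝ) (ω : Ω) : ℝ :=
  (n : ℝ)⁻¹ * ∑ i ∈ Finset.Icc 1 n, kappa d s b (X i ω)

/-- The strong mixing (α-mixing) coefficient of the sequence `X`. -/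
def alphaMix {Ω : Type*} [MeasurableSpace Ω] (P : Measure Ω)
    {d : ℕ} (X : ℕ → Ω → (Fin d → ℝ)) (m : ℕ) : ℝ :=
  sSup {r : ℝ | ∃ k : ℕ, 1 ≤ k ∧ ∃ A B : Set Ω,
    MeasurableSet[⨆ i ∈ Set.Icc 1 k, MeasurableSpace.comap (X i) inferInstance] A ∧
    MeasurableSet[⨆ i ∈ Set.Ici (k + m), MeasurableSpace.comap (X i) inferInstance] B ∧
    r = |(P (A ∩ B)).toReal - (P A).toReal * (P B).toReal|}

/-- Strict stationarity of the sequence `X` (indexed from 1). -/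
def IsStrictlyStationary {Ω : Type*} [MeasurableSpace Ω] (P : Measure Ω)
    {d : ℕ} (X : ℕ → Ω → (Fin d → ℝ)) : Prop :=
  ∀ k n : ℕ,
    Measure.map (fun ω => fun t : Fin n => X (t.1 + 1 + k) ω) P =
      Measure.map (fun ω => fun t : Fin n => X (t.1 + 1) ω) P

/-- Covariance of two real random variables. -/
def cov {Ω : Type*} [MeasurableSpace Ω] (P : Measure Ω) (Y Z : Ω → ℝ) : ℝ :=
  ∫ ω, Y ω * Z ω ∂P - (∫ ω, Y ω ∂P) * (∫ ω, Z ω ∂P)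

/-- The bias functional `g(s)` from Theorem MSE. -/
def gfun (d : ℕ) (f : (Fin d → ℝ) → ℝ) (s : Fin d → ℝ) : ℝ :=
  (∑ i, (1 - ((d : ℝ) + 1) * s i) * fderiv ℝ f s (Pi.single i 1)) +
    (1 / 2) * ∑ i, ∑ j, s i * ((if i = j then (1 : ℝ) else 0) - s j) *
      fderiv ℝ (fun t => fderiv ℝ f t (Pi.single i 1)) s (Pi.single j 1)

/-- The centered kernel variable `Ξ_{i,n}(s)`. -/
def Xi {Ω : Type*} [MeasurableSpace Ω] (P : Measure Ω) {d : ℕ}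
    (X : ℕ → Ω → (Fin d → ℝ)) (s : Fin d → ℝ) (b : ℝ) (i : ℕ) (ω : Ω) : ℝ :=
  kappa d s b (X i ω) - ∫ ω', kappa d s b (X i ω') ∂P

/-- The `j`-th big block of indices `I_j`. -/
def bigBlock (pn qn j : ℕ) : Finset ℕ :=
  Finset.Icc ((j - 1) * (pn + qn) + 1) ((j - 1) * (pn + qn) + pn)

/-- The `j`-th small block of indices `J_j`. -/
def smallBlock (pn qn j : ℕ) : Finset ℕ :=
  Finset.Icc ((j - 1) * (pn + qn) + pn + 1) (j * (pn + qn))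

/-- Assumption (A2): pairwise joint densities exist and the local dependence
functions `h_{i,j} = f_{X_i,X_j} - f_{X_i} f_{X_j}` have uniformly bounded `L^p` norms. -/
def AssumpA2 {Ω : Type*} [MeasurableSpace Ω] (P : Measure Ω) {d : ℕ}
    (X : ℕ → Ω → (Fin d → ℝ)) (f : (Fin d → ℝ) → ℝ) (p : ℝ) : Prop :=
  ∃ fpair : ℕ → ℕ → ((Fin d → ℝ) × (Fin d → ℝ)) → ℝ,
    (∀ i j : ℕ, 1 ≤ i → 1 ≤ j → i ≠ j →
      Measure.map (fun ω => (X i ω, X j ω)) P =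
        volume.withDensity (fun z => ENNReal.ofReal (fpair i j z))) ∧
    (∀ i j : ℕ, 1 ≤ i → 1 ≤ j → i ≠ j →
      Integrable (fun z => |fpair i j z - f z.1 * f z.2| ^ p)
        (volume.restrict (Sd d ×ˢ Sd d))) ∧
    ∃ C : ℝ, ∀ i j : ℕ, 1 ≤ i → 1 ≤ j → i ≠ j →
      (∫ z in Sd d ×ˢ Sd d, |fpair i j z - f z.1 * f z.2| ^ p) ^ (1 / p) ≤ C

/-- Stirling ratio `R(z) = √(2π) e^{-z} z^{z+1/2} / Γ(z+1)`. -/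
def Rfun (z : ℝ) : ℝ :=
  Real.sqrt (2 * π) * Real.exp (-z) * z ^ (z + 1 / 2) / Real.Gamma (z + 1)

end

/-! Along the segment from `s0` to `shat` the function `f` lies below its second-order Taylor
parabola, so `f shat ≤ f s0 - (lam / 2) * ‖shat - s0‖₂²` because the gradient vanishes at `s0`.
Conversely, `g s0 ≤ g shat` and `|g - f| ≤ M` give `f s0 - f shat ≤ 2 * M`. The Taylor bound comes
from concavity of `f` minus the parabola rather than from a remainder formula, which accommodates
an endpoint `shat` on the boundary of the simplex. -/

theorem le_add_mul_add_half_mul_sq_of_deriv2_le {φ φ' φ'' : ℝ → ℝ} {a b m c : ℝ} (hab : a < b)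
    (hφ : ContinuousOn φ (Set.Icc a b)) (hφa : HasDerivWithinAt φ m (Set.Ioi a) a)
    (hφ' : ∀ t ∈ Set.Ioo a b, HasDerivAt φ (φ' t) t)
    (hφ'' : ∀ t ∈ Set.Ioo a b, HasDerivAt φ' (φ'' t) t)
    (hc : ∀ t ∈ Set.Ioo a b, φ'' t ≤ c) :
    φ b ≤ φ a + m * (b - a) + c / 2 * (b - a) ^ 2 := by
  have hlin (t : ℝ) : HasDerivAt (fun t ↦ c * (t - a)) c t := by
    simpa using ((hasDerivAt_id t).sub_const a).const_mul c
  have hquad (t : ℝ) : HasDerivAt (fun t ↦ c / 2 * (t - a) ^ 2) (c * (t - a)) t :=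
    ((((hasDerivAt_id' t).sub_const a).pow 2).const_mul (c / 2)).congr_deriv (by push_cast; ring)
  have hconcave : ConcaveOn ℝ (Set.Icc a b) (φ - fun t ↦ c / 2 * (t - a) ^ 2) := by
    refine concaveOn_of_hasDerivWithinAt2_nonpos (convex_Icc a b) (hφ.sub (by fun_prop))
      (f' := fun t ↦ φ' t - c * (t - a)) (f'' := fun t ↦ φ'' t - c) ?_ ?_ ?_ <;> rw [interior_Icc]
    · exact fun t ht ↦ ((hφ' t ht).sub (hquad t)).hasDerivWithinAt
    · exact fun t ht ↦ ((hφ'' t ht).sub (hlin t)).hasDerivWithinAt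
    · exact fun t ht ↦ sub_nonpos.2 (hc t ht)
  have hslope := hconcave.slope_le_of_hasDerivWithinAt_Ioi (Set.left_mem_Icc.2 hab.le)
    (Set.right_mem_Icc.2 hab.le) hab (hφa.sub (hquad a).hasDerivWithinAt)
  rw [slope_def_field, div_le_iff₀ (sub_pos.2 hab)] at hslope
  simp only [Pi.sub_apply, sub_self] at hslope
  linarith

section Segment

variable {E : Type*} [NormedAddCommGroup E] [NormedSpace ℝ E] {f : E → ℝ} {x y : E}

theorem hasDerivAt_comp_lineMap {t : ℝ} (hf : DifferentiableAt ℝ f (AffineMap.lineMap x y t)) :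
    HasDerivAt (fun t : ℝ ↦ f (AffineMap.lineMap x y t))
      (fderiv ℝ f (AffineMap.lineMap x y t) (y - x)) t :=
  hf.hasFDerivAt.comp_hasDerivAt t AffineMap.hasDerivAt_lineMap

theorem le_add_fderiv_add_half_of_fderiv_fderiv_le {c : ℝ} (hf : ContinuousOn f (segment ℝ x y))
    (hfx : DifferentiableAt ℝ f x) (hf2 : ∀ z ∈ openSegment ℝ x y, ContDiffAt ℝ 2 f z)
    (hc : ∀ z ∈ openSegment ℝ x y,
      fderiv ℝ (fun w ↦ fderiv ℝ f w (y - x)) z (y - x) ≤ c) :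
    f y ≤ f x + fderiv ℝ f x (y - x) + c / 2 := by
  have hmem (t : ℝ) (ht : t ∈ Set.Ioo (0 : ℝ) 1) : AffineMap.lineMap x y t ∈ openSegment ℝ x y :=
    lineMap_mem_openSegment ℝ x y ht
  have hcont : ContinuousOn (fun t : ℝ ↦ f (AffineMap.lineMap x y t)) (Set.Icc 0 1) :=
    hf.comp AffineMap.lineMap_continuous.continuousOn fun _ ht ↦ lineMap_mem_segment ℝ x y ht
  have hderiv0 : HasDerivAt (fun t : ℝ ↦ f (AffineMap.lineMap x y t)) (fderiv ℝ f x (y - x)) 0 := by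
    simpa using hasDerivAt_comp_lineMap (x := x) (y := y) (t := 0) (by simpa using hfx)
  have hdiff2 (z : E) (hz : z ∈ openSegment ℝ x y) :
      DifferentiableAt ℝ (fun w ↦ fderiv ℝ f w (y - x)) z :=
    (((hf2 z hz).fderiv_right (m := 1) (by norm_num)).differentiableAt one_ne_zero).clm_apply
      (differentiableAt_const _)
  simpa using le_add_mul_add_half_mul_sq_of_deriv2_le one_pos hcont hderiv0.hasDerivWithinAt
    (fun t ht ↦ hasDerivAt_comp_lineMap ((hf2 _ (hmem t ht)).differentiableAt two_ne_zero))
    (fun t ht ↦ hasDerivAt_comp_lineMap (hdiff2 _ (hmem t ht))) fun t ht ↦ hc _ (hmem t ht)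

end Segment

theorem sub_le_two_mul_of_abs_sub_le {α : Type*} {f g : α → ℝ} {x y : α} {M : ℝ} (hg : g x ≤ g y)
    (hx : |g x - f x| ≤ M) (hy : |g y - f y| ≤ M) : f x - f y ≤ 2 * M := by
  linarith [(abs_le.1 hx).1, (abs_le.1 hy).2]

-- `q v` plays the role of the squared Euclidean length of `v`, which on `Fin d → ℝ` is not the
-- square of the norm `‖v‖`.
theorem mode_estimator_localization_general {E : Type*} [NormedAddCommGroup E] [NormedSpace ℝ E]
    {S : Set E} (hS : Convex ℝ S) {f g q : E → ℝ} (hfS : ContinuousOn f S)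
    (hf : ContDiffOn ℝ 2 f (interior S)) {s0 shat : E} (hs0 : s0 ∈ interior S) (hshat : shat ∈ S)
    (hgrad : fderiv ℝ f s0 = 0) (hg : g s0 ≤ g shat) {lam : ℝ} (hlam : 0 < lam)
    (hHess : ∀ t ∈ openSegment ℝ s0 shat,
      fderiv ℝ (fun y ↦ fderiv ℝ f y (shat - s0)) t (shat - s0) ≤ -lam * q (shat - s0))
    {M : ℝ} (hMs0 : |g s0 - f s0| ≤ M) (hMshat : |g shat - f shat| ≤ M) :
    q (shat - s0) ≤ 4 / lam * M := by
  have hC2 (z : E) (hz : z ∈ interior S) : ContDiffAt ℝ 2 f z :=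
    hf.contDiffAt (isOpen_interior.mem_nhds hz)
  have htaylor : f shat ≤ f s0 + fderiv ℝ f s0 (shat - s0) + -lam * q (shat - s0) / 2 :=
    le_add_fderiv_add_half_of_fderiv_fderiv_le
      (hfS.mono (hS.segment_subset (interior_subset hs0) hshat))
      ((hC2 s0 hs0).differentiableAt two_ne_zero)
      (fun z hz ↦ hC2 z (hS.openSegment_interior_self_subset_interior hs0 hshat hz)) hHess
  have hgap : f s0 - f shat ≤ 2 * M := sub_le_two_mul_of_abs_sub_le hg hMs0 hMshat
  rw [hgrad, zero_apply] at htaylor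
  rw [div_mul_eq_mul_div, le_div_iff₀ hlam]
  linarith

theorem Sd_eq_setOf_nonneg_sum_le_one (d : ℕ) : Sd d = {s | 0 ≤ s ∧ ∑ i, s i ≤ 1} := by
  ext s
  constructor
  · rintro ⟨hs, hsum⟩
    exact ⟨fun i ↦ (hs i).1, (Finset.sum_le_sum fun i _ ↦ le_abs_self (s i)).trans hsum⟩
  · rintro ⟨hs, hsum⟩
    have hle (i : Fin d) : s i ≤ 1 :=
      (Finset.single_le_sum (fun j _ ↦ hs j) (Finset.mem_univ i)).trans hsum
    exact ⟨fun i ↦ ⟨hs i, hle i⟩, by simpa only [abs_of_nonneg (hs _)] using hsum⟩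

theorem convex_Sd (d : ℕ) : Convex ℝ (Sd d) := by
  rw [Sd_eq_setOf_nonneg_sum_le_one]
  have hsum : IsLinearMap ℝ fun s : Fin d → ℝ ↦ ∑ i, s i :=
    ⟨fun _ _ ↦ Finset.sum_add_distrib, fun _ _ ↦ (Finset.mul_sum ..).symm⟩
  exact (convex_Ici 0).inter (convex_halfSpace_le hsum 1)

theorem isOpen_SdInt (d : ℕ) : IsOpen (SdInt d) := by
  have hbox : IsOpen {s : Fin d → ℝ | ∀ i, s i ∈ Set.Ioo (0 : ℝ) 1} := by
    simpa only [Set.pi, Set.mem_univ, true_imp_iff] using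
      isOpen_set_pi Set.finite_univ fun (_ : Fin d) _ ↦ isOpen_Ioo (a := (0 : ℝ)) (b := 1)
  have hsum : IsOpen {s : Fin d → ℝ | ∑ i, |s i| < 1} := isOpen_lt (by fun_prop) continuous_const
  exact hbox.inter hsum

theorem SdInt_subset_interior_Sd (d : ℕ) : SdInt d ⊆ interior (Sd d) :=
  interior_maximal (fun _ hs ↦ ⟨fun i ↦ Set.Ioo_subset_Icc_self (hs.1 i), hs.2.le⟩) (isOpen_SdInt d)

/-- Quadratic localization of the mode estimator. -/
theorem mode_estimator_localization (d : ℕ) (hd : 1 ≤ d)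
    (f g : (Fin d → ℝ) → ℝ)
    (hf : ContDiffOn ℝ 2 f (Sd d))
    (s0 : Fin d → ℝ) (hs0 : s0 ∈ SdInt d)
    -- s0 is the unique maximizer of f on S_d
    (hmaxf : ∀ t ∈ Sd d, t ≠ s0 → f t < f s0)
    -- the gradient of f vanishes at s0
    (hgrad : fderiv ℝ f s0 = 0)
    (shat : Fin d → ℝ) (hshat : shat ∈ Sd d)
    -- shat maximizes g on S_d
    (hmaxg : ∀ t ∈ Sd d, g t ≤ g shat)
    (lam : ℝ) (hlam : 0 < lam)
    -- −∇²f(t) ⪰ λI at every point of the segment joining s0 and shat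
    (hHess : ∀ t ∈ segment ℝ s0 shat, ∀ v : Fin d → ℝ,
      fderiv ℝ (fun y => fderiv ℝ f y v) t v ≤ -lam * ∑ i, (v i) ^ 2) :
    ∀ M : ℝ, (∀ t ∈ Sd d, |g t - f t| ≤ M) →
      ∑ i, (shat i - s0 i) ^ 2 ≤ (4 / lam) * M := by
  have hs0_int : s0 ∈ interior (Sd d) := SdInt_subset_interior_Sd d hs0
  have hs0_mem : s0 ∈ Sd d := interior_subset hs0_int
  exact fun M hM ↦ mode_estimator_localization_general (q := fun v ↦ ∑ i, v i ^ 2)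
    (convex_Sd d) hf.continuousOn (hf.mono interior_subset) hs0_int hshat hgrad (hmaxg s0 hs0_mem)
    hlam (fun t ht ↦ hHess t (openSegment_subset_segment ℝ s0 shat ht) (shat - s0))
    (hM s0 hs0_mem) (hM shat hshat)
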